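/- Let (G,c,o) be an infinite recurrent rooted network, let y_n be a sequence of vertices with y_n → ∞ (leaving every finite set), and suppose the Green densities g_o(·,y_n) converge pointwise to a function h:V→[0,∞). Then h is a potential on (G,c,o). -/

import Mathlib

open scoped ENNReal
open Filter Topology Classical
noncomputable section

/-- A rooted network: a connected, locally finite simple graph with positive
symmetric edge conductances (extended by `0` to non-edges) and a root `o`. -/
structure RootedNetwork (V : Type*) where
  G : SimpleGraph V
  locallyFinite : ∀ x : V, (G.neighborSet x).Finite
  connected : G.Connected
  c : V → V → ℝ
  c_symm : ∀ x y, c x y = c y x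
  c_pos : ∀ x y, G.Adj x y → 0 < c x y
  c_eq_zero : ∀ x y, ¬ G.Adj x y → c x y = 0
  o : V

namespace RootedNetwork

variable {V : Type*}

/-- The vertex weight `c_x = Σ_{z ∼ x} c_{xz}`. -/
noncomputable def cv (N : RootedNetwork V) (x : V) : ℝ := ∑' y, N.c x y

/-- The transition probability `p(x,y) = c_{xy} / c_x` of the network random walk. -/
noncomputable def p (N : RootedNetwork V) (x y : V) : ℝ≥0∞ :=
  ENNReal.ofReal (N.c x y / N.cv x)

/-- The probability that the network random walk started at `x` begins with the
given finite sequence of steps. -/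
noncomputable def pathProb (N : RootedNetwork V) : V → List V → ℝ≥0∞
  | _, [] => 1
  | x, y :: l => N.p x y * pathProb N y l

/-- The probability, starting from `x`, that the walk ever visits `b`
(`P_x(τ_b < ∞)`), computed by decomposing over the finite path up to the first
visit of `b`. -/
noncomputable def hitProb (N : RootedNetwork V) (x b : V) : ℝ≥0∞ :=
  if x = b then 1
  else ∑' l : {l : List V // l.getLast? = some b ∧ b ∉ l.dropLast}, N.pathProb x l.1

/-- A rooted network is recurrent if the walk started from any vertex almost
surely visits the root `o`. -/
def Recurrent (N : RootedNetwork V) : Prop := ∀ x : V, N.hitProb x N.o = 1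

/-- The Green kernel `G_o(x,y) = Σ_{n ≥ 0} P_x(X_n = y, τ_o > n)` of the walk
killed at the root, computed as a sum over finite paths from `x` to `y`
avoiding `o` (the `n = 0` term is the first summand). -/
noncomputable def GreenKer (N : RootedNetwork V) (x y : V) : ℝ≥0∞ :=
  (if x = y ∧ x ≠ N.o then 1 else 0) +
    ∑' l : {l : List V // l.getLast? = some y ∧ N.o ∉ x :: l}, N.pathProb x l.1

/-- The Green density `g_o(x,y) = G_o(x,y) / c_y`. -/
noncomputable def greenDensity (N : RootedNetwork V) (x y : V) : ℝ≥0∞ :=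
  N.GreenKer x y / ENNReal.ofReal (N.cv y)

/-- The network Laplacian `Δ f (v) = Σ_{x ∼ v} c_{vx} (f(x) - f(v))`. -/
noncomputable def lap (N : RootedNetwork V) (f : V → ℝ) (v : V) : ℝ :=
  ∑' x, N.c v x * (f x - f v)

/-- A potential: a nonnegative function vanishing at `o`, with Laplacian `1`
at `o`, harmonic everywhere else. -/
def IsPotential (N : RootedNetwork V) (h : V → ℝ) : Prop :=
  (∀ v, 0 ≤ h v) ∧ h N.o = 0 ∧ N.lap h N.o = 1 ∧ ∀ v, v ≠ N.o → N.lap h v = 0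

end RootedNetwork

/-!
Reversing paths gives `c_x E(x, y) = c_y E(y, x)`, where `E(x, y)` is the total probability of the
paths from `x` to `y` whose interior avoids `o`. Since `E(y, o)` is the probability of hitting `o`
from `y`, while conditioning on the first step gives `E(o, y) = Σ_z p(o, z) G_o(z, y)`, the
Laplacian of `g_o(·, y)` at `o` equals that hitting probability, which is `1` under recurrence.
Away from `o` and `y` the first step decomposition says that `g_o(·, y)` is harmonic. By local
finiteness the Laplacian commutes with pointwise limits, and each vertex eventually differs from
`y_n`.
-/

theorem tsum_list_eq_add_tsum_cons {α : Type*} (f : List α → ℝ≥0∞) :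
    ∑' l, f l = f [] + ∑' a, ∑' l, f (a :: l) := by
  have cons_injective : Function.Injective fun q : α × List α => q.1 :: q.2 := by
    rintro ⟨a, l⟩ ⟨b, m⟩ h
    simpa using h
  rw [ENNReal.tsum_eq_add_tsum_ite [], ← ENNReal.tsum_prod, ← cons_injective.tsum_eq]
  · simp
  · rintro (_ | ⟨a, l⟩) hl
    · simp at hl
    · exact ⟨(a, l), rfl⟩

theorem tsum_getLast?_eq_some {α : Type*} (b : α) (P : List α → Prop) (f : List α → ℝ≥0∞) :
    ∑' l : {l : List α // l.getLast? = some b ∧ P l}, f l =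
      ∑' m : List α, if P (m ++ [b]) then f (m ++ [b]) else 0 := by
  have support_subset : Function.support ({l | l.getLast? = some b ∧ P l}.indicator f) ⊆
      Set.range (· ++ [b]) := by
    intro l hl
    obtain ⟨m, rfl⟩ := List.getLast?_eq_some_iff.1 (Set.mem_of_indicator_ne_zero hl).1
    exact ⟨m, rfl⟩
  calc ∑' l : {l : List α // l.getLast? = some b ∧ P l}, f l
      = ∑' l, {l | l.getLast? = some b ∧ P l}.indicator f l := tsum_subtype _ f
    _ = ∑' m, {l | l.getLast? = some b ∧ P l}.indicator f (m ++ [b]) :=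
      ((List.append_left_injective [b]).tsum_eq support_subset).symm
    _ = ∑' m, if P (m ++ [b]) then f (m ++ [b]) else 0 := by simp [Set.indicator_apply]

namespace RootedNetwork

variable {V : Type*} (N : RootedNetwork V)

instance : N.G.LocallyFinite := fun x => (N.locallyFinite x).fintype

section Conductances

theorem c_eq_zero_of_notMem_neighborFinset {x z : V} (hz : z ∉ N.G.neighborFinset x) :
    N.c x z = 0 :=
  N.c_eq_zero x z (by rwa [← SimpleGraph.mem_neighborFinset])

theorem c_nonneg (x z : V) : 0 ≤ N.c x z := by
  by_cases hz : N.G.Adj x z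
  · exact (N.c_pos x z hz).le
  · exact (N.c_eq_zero x z hz).ge

theorem cv_eq_sum (x : V) : N.cv x = ∑ z ∈ N.G.neighborFinset x, N.c x z :=
  tsum_eq_sum fun _ => N.c_eq_zero_of_notMem_neighborFinset

theorem cv_pos [Nontrivial V] (x : V) : 0 < N.cv x := by
  obtain ⟨z, hz⟩ := N.connected.preconnected.exists_adj_of_nontrivial x
  rw [cv_eq_sum]
  exact Finset.sum_pos' (fun z _ => N.c_nonneg x z)
    ⟨z, (N.G.mem_neighborFinset x z).2 hz, N.c_pos x z hz⟩

theorem ofReal_cv_ne_zero [Nontrivial V] (x : V) : ENNReal.ofReal (N.cv x) ≠ 0 :=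
  (ENNReal.ofReal_pos.2 (N.cv_pos x)).ne'

theorem ofReal_cv_mul_p [Nontrivial V] (x z : V) :
    ENNReal.ofReal (N.cv x) * N.p x z = ENNReal.ofReal (N.c x z) := by
  rw [p, ← ENNReal.ofReal_mul (N.cv_pos x).le, mul_div_cancel₀ _ (N.cv_pos x).ne']

theorem p_ne_zero_of_adj [Nontrivial V] {x z : V} (hxz : N.G.Adj x z) : N.p x z ≠ 0 :=
  (ENNReal.ofReal_pos.2 (div_pos (N.c_pos x z hxz) (N.cv_pos x))).ne'

theorem tsum_p_le_one (x : V) : ∑' z, N.p x z ≤ 1 := by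
  have cv_nonneg : 0 ≤ N.cv x := tsum_nonneg (N.c_nonneg x)
  calc ∑' z, N.p x z
      = ∑ z ∈ N.G.neighborFinset x, N.p x z :=
        tsum_eq_sum fun z hz => by simp [p, N.c_eq_zero_of_notMem_neighborFinset hz]
    _ = ENNReal.ofReal (N.cv x / N.cv x) := by
        simp only [p]
        rw [← ENNReal.ofReal_sum_of_nonneg fun z _ => div_nonneg (N.c_nonneg x z) cv_nonneg,
          ← Finset.sum_div, ← cv_eq_sum]
    _ ≤ 1 := ENNReal.ofReal_le_one.2 (div_self_le_one _)

end Conductances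

section Laplacian

theorem lap_eq_sum (f : V → ℝ) (v : V) :
    N.lap f v = ∑ z ∈ N.G.neighborFinset v, N.c v z * (f z - f v) :=
  tsum_eq_sum fun z hz => by rw [N.c_eq_zero_of_notMem_neighborFinset hz, zero_mul]

theorem tendsto_lap {ι : Type*} {l : Filter ι} {f : ι → V → ℝ} {h : V → ℝ}
    (hf : ∀ x, Tendsto (fun i => f i x) l (𝓝 (h x))) (v : V) :
    Tendsto (fun i => N.lap (f i) v) l (𝓝 (N.lap h v)) := by
  simp only [lap_eq_sum]
  exact tendsto_finsetSum _ fun z _ => ((hf z).sub (hf v)).const_mul _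

theorem lap_toReal {f : V → ℝ≥0∞} (hf : ∀ z, f z ≠ ⊤) (v : V) :
    N.lap (fun z => (f z).toReal) v =
      (∑' z, ENNReal.ofReal (N.c v z) * f z).toReal - N.cv v * (f v).toReal := by
  have tsum_eq : ∑' z, ENNReal.ofReal (N.c v z) * f z =
      ∑ z ∈ N.G.neighborFinset v, ENNReal.ofReal (N.c v z) * f z :=
    tsum_eq_sum fun z hz => by simp [N.c_eq_zero_of_notMem_neighborFinset hz]
  rw [lap_eq_sum, tsum_eq,
    ENNReal.toReal_sum fun z _ => ENNReal.mul_ne_top ENNReal.ofReal_ne_top (hf z)]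
  simp only [ENNReal.toReal_mul, ENNReal.toReal_ofReal (N.c_nonneg v _), mul_sub,
    Finset.sum_sub_distrib, cv_eq_sum, Finset.sum_mul]

end Laplacian

section Paths

theorem pathProb_append_cons (l : List V) (x z : V) (m : List V) :
    N.pathProb x (l ++ z :: m) = N.pathProb x (l ++ [z]) * N.pathProb z m := by
  induction l generalizing x with
  | nil => simp [pathProb]
  | cons a l ih => simp only [List.cons_append, pathProb, ih, mul_assoc]

theorem ofReal_cv_mul_pathProb_reverse [Nontrivial V] (m : List V) (x y : V) :
    ENNReal.ofReal (N.cv y) * N.pathProb y (m.reverse ++ [x]) =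
      ENNReal.ofReal (N.cv x) * N.pathProb x (m ++ [y]) := by
  induction m generalizing x with
  | nil => simp [pathProb, ofReal_cv_mul_p, N.c_symm x y]
  | cons z m ih =>
    calc ENNReal.ofReal (N.cv y) * N.pathProb y ((z :: m).reverse ++ [x])
        = ENNReal.ofReal (N.cv y) * N.pathProb y (m.reverse ++ [z]) * N.p z x := by
          rw [List.reverse_cons, List.append_assoc, List.singleton_append, pathProb_append_cons]
          simp only [pathProb, mul_one, mul_assoc]
      _ = ENNReal.ofReal (N.cv z) * N.p z x * N.pathProb z (m ++ [y]) := by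
          rw [ih, mul_right_comm]
      _ = ENNReal.ofReal (N.cv x) * N.pathProb x (z :: m ++ [y]) := by
          rw [ofReal_cv_mul_p, N.c_symm z x, ← ofReal_cv_mul_p, mul_assoc, List.cons_append,
            pathProb]

/-- The expected number of visits to `y` at positive times, up to and including the first return
to the root, of the walk started at `x`. It is the sum of the probabilities of the paths from `x`
to `y` of positive length whose interior `m` avoids the root; the endpoints are unrestricted. -/
def avoidingPathSum (x y : V) : ℝ≥0∞ :=
  ∑' m : List V, if N.o ∉ m then N.pathProb x (m ++ [y]) else 0

theorem ofReal_cv_mul_avoidingPathSum_comm [Nontrivial V] (x y : V) :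
    ENNReal.ofReal (N.cv x) * N.avoidingPathSum x y =
      ENNReal.ofReal (N.cv y) * N.avoidingPathSum y x := by
  simp only [avoidingPathSum, ← ENNReal.tsum_mul_left]
  rw [← (List.reverse_involutive (α := V)).toPerm.tsum_eq]
  refine tsum_congr fun m => ?_
  simp only [Function.Involutive.coe_toPerm, List.mem_reverse, mul_ite, mul_zero,
    ofReal_cv_mul_pathProb_reverse]

theorem avoidingPathSum_eq_add (x y : V) :
    N.avoidingPathSum x y =
      N.p x y + ∑' z, N.p x z * if z = N.o then 0 else N.avoidingPathSum z y := by
  rw [avoidingPathSum, tsum_list_eq_add_tsum_cons]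
  congr 1
  · simp [pathProb]
  · refine tsum_congr fun z => ?_
    by_cases hz : z = N.o
    · simp [hz]
    · simp [hz, Ne.symm hz, pathProb, avoidingPathSum, ← ENNReal.tsum_mul_left]

end Paths

section HittingProbability

theorem hitProb_root_eq_avoidingPathSum {x : V} (hx : x ≠ N.o) :
    N.hitProb x N.o = N.avoidingPathSum x N.o := by
  rw [hitProb, if_neg hx, tsum_getLast?_eq_some N.o (fun l => N.o ∉ l.dropLast)]
  simp only [List.dropLast_concat, avoidingPathSum]

theorem tsum_pathProb_root_length_lt_le_one (n : ℕ) (x : V) :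
    ∑' m : List V, (if N.o ∉ m ∧ m.length < n then N.pathProb x (m ++ [N.o]) else 0) ≤ 1 := by
  induction n generalizing x with
  | zero => simp
  | succ n ih =>
    rw [tsum_list_eq_add_tsum_cons]
    calc _ ≤ N.p x N.o + ∑' z, (if z = N.o then 0 else N.p x z) := by
          gcongr with z
          · simp [pathProb]
          · by_cases hz : z = N.o
            · simp [hz]
            · simpa [hz, Ne.symm hz, pathProb, ← ENNReal.tsum_mul_left] using
                mul_le_mul_right (ih z) (N.p x z)
      _ = ∑' z, N.p x z := (ENNReal.tsum_eq_add_tsum_ite N.o).symm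
      _ ≤ 1 := N.tsum_p_le_one x

theorem avoidingPathSum_root_le_one (x : V) : N.avoidingPathSum x N.o ≤ 1 := by
  refine ENNReal.tsum_eq_iSup_sum.trans_le (iSup_le fun s => ?_)
  refine le_trans ?_ (N.tsum_pathProb_root_length_lt_le_one (s.sup List.length + 1) x)
  refine le_trans (Finset.sum_le_sum fun m hm => ?_) (ENNReal.sum_le_tsum s)
  have hlength : m.length < s.sup List.length + 1 := Nat.lt_succ_of_le (Finset.le_sup hm)
  simp only [hlength, and_true, le_refl]

end HittingProbability

section Green

variable {N} {y : V}

theorem greenKer_root_left (y : V) : N.GreenKer N.o y = 0 := by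
  simp [GreenKer]

theorem greenKer_eq_add_avoidingPathSum {x : V} (hx : x ≠ N.o) (hy : y ≠ N.o) :
    N.GreenKer x y = (if x = y then 1 else 0) + N.avoidingPathSum x y := by
  rw [GreenKer, tsum_getLast?_eq_some y (fun l => N.o ∉ x :: l)]
  simp [hx, hx.symm, hy.symm, avoidingPathSum]

theorem tsum_p_mul_greenKer (hy : y ≠ N.o) (x : V) :
    ∑' z, N.p x z * N.GreenKer z y = N.avoidingPathSum x y := by
  have greenKer_eq (z : V) : N.GreenKer z y =
      (if z = y then 1 else 0) + if z = N.o then 0 else N.avoidingPathSum z y := by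
    by_cases hz : z = N.o
    · simp [hz, hy.symm, greenKer_root_left]
    · rw [greenKer_eq_add_avoidingPathSum hz hy, if_neg hz]
  simp only [greenKer_eq, mul_add, ENNReal.tsum_add, mul_ite, mul_one, mul_zero, tsum_ite_eq,
    N.avoidingPathSum_eq_add x y]

variable [Nontrivial V]

theorem ofReal_cv_mul_avoidingPathSum_root_left (hy : y ≠ N.o) :
    ENNReal.ofReal (N.cv N.o) * N.avoidingPathSum N.o y =
      ENNReal.ofReal (N.cv y) * N.hitProb y N.o := by
  rw [ofReal_cv_mul_avoidingPathSum_comm, hitProb_root_eq_avoidingPathSum N hy]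

theorem avoidingPathSum_root_left_ne_top (y : V) : N.avoidingPathSum N.o y ≠ ⊤ := by
  intro htop
  have hreverse := N.ofReal_cv_mul_avoidingPathSum_comm N.o y
  rw [htop, ENNReal.mul_top (N.ofReal_cv_ne_zero _)] at hreverse
  exact ENNReal.mul_ne_top ENNReal.ofReal_ne_top
    (ne_top_of_le_ne_top ENNReal.one_ne_top (N.avoidingPathSum_root_le_one y)) hreverse.symm

theorem greenKer_ne_top_of_adj (hy : y ≠ N.o) {a b : V} (hab : N.G.Adj a b)
    (ha : N.GreenKer a y ≠ ⊤) : N.GreenKer b y ≠ ⊤ := by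
  have hpathSum : N.avoidingPathSum a y ≠ ⊤ := by
    by_cases hao : a = N.o
    · exact hao ▸ avoidingPathSum_root_left_ne_top y
    · rw [greenKer_eq_add_avoidingPathSum hao hy] at ha
      exact (ENNReal.add_ne_top.1 ha).2
  intro hb
  refine hpathSum ?_
  rw [← tsum_p_mul_greenKer hy]
  exact ENNReal.tsum_eq_top_of_eq_top ⟨b, by rw [hb, ENNReal.mul_top (N.p_ne_zero_of_adj hab)]⟩

theorem greenKer_ne_top (hy : y ≠ N.o) (x : V) : N.GreenKer x y ≠ ⊤ := by
  have hreach := (N.G.reachable_iff_reflTransGen N.o x).1 (N.connected.preconnected N.o x)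
  induction hreach with
  | refl => simp [greenKer_root_left]
  | tail _ hab ih => exact greenKer_ne_top_of_adj hy hab ih

theorem greenDensity_ne_top (hy : y ≠ N.o) (x : V) : N.greenDensity x y ≠ ⊤ :=
  ENNReal.div_ne_top (greenKer_ne_top hy x) (N.ofReal_cv_ne_zero y)

theorem tsum_c_mul_greenDensity (hy : y ≠ N.o) (x : V) :
    ∑' z, ENNReal.ofReal (N.c x z) * N.greenDensity z y =
      ENNReal.ofReal (N.cv x) * N.avoidingPathSum x y / ENNReal.ofReal (N.cv y) := by
  simp only [greenDensity, ← ofReal_cv_mul_p, div_eq_mul_inv, ← mul_assoc, ENNReal.tsum_mul_right]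
  simp only [mul_assoc, ENNReal.tsum_mul_left, tsum_p_mul_greenKer hy]

theorem lap_greenDensity_root (hy : y ≠ N.o) :
    N.lap (fun z => (N.greenDensity z y).toReal) N.o = (N.hitProb y N.o).toReal := by
  rw [lap_toReal N (greenDensity_ne_top hy), tsum_c_mul_greenDensity hy,
    ofReal_cv_mul_avoidingPathSum_root_left hy,
    mul_div_assoc, ENNReal.mul_div_cancel (N.ofReal_cv_ne_zero y) ENNReal.ofReal_ne_top,
    greenDensity, greenKer_root_left, ENNReal.zero_div, ENNReal.toReal_zero, mul_zero, sub_zero]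

theorem lap_greenDensity_of_ne (hy : y ≠ N.o) {v : V} (hvo : v ≠ N.o) (hvy : v ≠ y) :
    N.lap (fun z => (N.greenDensity z y).toReal) v = 0 := by
  have greenKer_eq : N.GreenKer v y = N.avoidingPathSum v y := by
    rw [greenKer_eq_add_avoidingPathSum hvo hy, if_neg hvy, zero_add]
  rw [lap_toReal N (greenDensity_ne_top hy), tsum_c_mul_greenDensity hy, ← greenKer_eq,
    mul_div_assoc, ← greenDensity, ENNReal.toReal_mul, ENNReal.toReal_ofReal (N.cv_pos v).le,
    sub_self]

end Green

end RootedNetwork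

open RootedNetwork in
theorem isPotential_of_greenDensity_limit_general {V ι : Type*} (N : RootedNetwork V)
    {l : Filter ι} [l.NeBot] {y : ι → V} (hy : Tendsto y l cofinite)
    (hhit : Tendsto (fun i => N.hitProb (y i) N.o) l (𝓝 1)) {h : V → ℝ}
    (hconv : ∀ x, Tendsto (fun i => (N.greenDensity x (y i)).toReal) l (𝓝 (h x))) :
    N.IsPotential h := by
  have : Infinite V := not_finite_iff_infinite.1 fun _ => hy.neBot.ne cofinite_eq_bot
  have hne (v : V) : ∀ᶠ i in l, y i ≠ v := hy.eventually (eventually_cofinite_ne v)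
  refine ⟨fun v => ge_of_tendsto' (hconv v) fun _ => ENNReal.toReal_nonneg, ?_, ?_, fun v hv => ?_⟩
  · refine tendsto_nhds_unique (hconv N.o) ?_
    simp [greenDensity, greenKer_root_left]
  · refine tendsto_nhds_unique_of_eventuallyEq (N.tendsto_lap hconv N.o)
      ((ENNReal.tendsto_toReal ENNReal.one_ne_top).comp hhit) ?_
    filter_upwards [hne N.o] with i hi using lap_greenDensity_root hi
  · refine tendsto_nhds_unique_of_eventuallyEq (N.tendsto_lap hconv v) tendsto_const_nhds ?_
    filter_upwards [hne N.o, hne v] with i hio hiv using lap_greenDensity_of_ne hio hv hiv.symm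

/-- On an infinite recurrent rooted network, any pointwise limit of Green
densities `g_o(·, y_n)` along a sequence of vertices leaving every finite set
is a potential. -/
theorem isPotential_of_greenDensity_limit {V : Type*} [Infinite V]
    (N : RootedNetwork V) (hrec : N.Recurrent)
    (y : ℕ → V) (hy : ∀ S : Set V, S.Finite → ∀ᶠ n in atTop, y n ∉ S)
    (h : V → ℝ) (hnn : ∀ v, 0 ≤ h v)
    (hconv : ∀ x : V,
      Tendsto (fun n => (N.greenDensity x (y n)).toReal) atTop (𝓝 (h x))) :
    N.IsPotential h :=
  isPotential_of_greenDensity_limit_general N (fun S hS => by simpa using hy Sᶜ hS)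
    (tendsto_const_nhds.congr fun n => (hrec (y n)).symm) hconv
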